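/- Assume the cost c : 𝒳 → ℝ has linear growth and ℳ(μ̌) ≠ ∅. If c is lower semi-continuous, then the map ℝ₊ ∋ ε ↦ P̲_ε(μ̌) ∈ ℝ is non-increasing, continuous and convex. -/

import Mathlib

open MeasureTheory Filter

namespace MMOT

/-- Path space `𝒳 = (ℝ^d)^T`. -/
abbrev Path (T d : ℕ) := Fin T → Fin d → ℝ

/-- σ-algebra generated by the coordinates `X_0, …, X_t` (0-indexed). -/
noncomputable def pastSigma (T d : ℕ) (t : ℕ) : MeasurableSpace (Path T d) :=
  ⨆ s : Fin T, ⨆ _ : (s : ℕ) ≤ t, MeasurableSpace.comap (fun x => x s) inferInstance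

def HasMarginals {T d : ℕ} (π : Measure (Path T d)) (μ : Fin T → Fin d → Measure ℝ) : Prop :=
  ∀ t i, π.map (fun x => x t i) = μ t i

/-- `E_π[X_{t+1,i} | X_0,…,X_t]`. -/
noncomputable def condNext {T d : ℕ} (π : Measure (Path T d)) (t : ℕ) (ht : t + 1 < T)
    (i : Fin d) : Path T d → ℝ :=
  π[fun x => x ⟨t + 1, ht⟩ i | pastSigma T d t]

def IsMartingaleMeasure {T d : ℕ} (π : Measure (Path T d)) : Prop :=
  ∀ (t : ℕ) (ht : t + 1 < T) (i : Fin d),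
    condNext π t ht i =ᵐ[π] fun x => x ⟨t, Nat.lt_of_succ_lt ht⟩ i

/-- The set `ℳ(μ̌)` of calibrated martingale measures. -/
def MartSet {T d : ℕ} (μ : Fin T → Fin d → Measure ℝ) : Set (Measure (Path T d)) :=
  {π | IsProbabilityMeasure π ∧ HasMarginals π μ ∧ IsMartingaleMeasure π}

/-- The relaxed set `ℳ_ε(μ̌)`: calibrated measures whose martingale defect is at most `ε`. -/
def MartSetEps {T d : ℕ} (μ : Fin T → Fin d → Measure ℝ) (ε : ℝ) :
    Set (Measure (Path T d)) :=
  {π | IsProbabilityMeasure π ∧ HasMarginals π μ ∧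
    ∀ (t : ℕ) (ht : t + 1 < T),
      ∫ x, ∑ i, |condNext π t ht i x - x ⟨t, Nat.lt_of_succ_lt ht⟩ i| ∂π ≤ ε}

def primalVals {T d : ℕ} (c : Path T d → ℝ) (S : Set (Measure (Path T d))) : Set ℝ :=
  {r | ∃ π ∈ S, Integrable c π ∧ r = ∫ x, c x ∂π}

noncomputable def PbarEps {T d : ℕ} (μ : Fin T → Fin d → Measure ℝ) (c : Path T d → ℝ)
    (ε : ℝ) : ℝ :=
  sSup (primalVals c (MartSetEps μ ε))

noncomputable def PlowEps {T d : ℕ} (μ : Fin T → Fin d → Measure ℝ) (c : Path T d → ℝ)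
    (ε : ℝ) : ℝ :=
  sInf (primalVals c (MartSetEps μ ε))

/-!
The martingale defect `∫ |π[X_{t+1} - X_t | past]| ∂π` is a supremum, over functions of the past
bounded by `1`, of functionals that are linear in `π`. Hence it is convex in `π`, so mixing elements
of `ℳ_{ε₁}` and `ℳ_{ε₂}` shows that the value function is convex. Being also non-increasing, it is
continuous on `[0, ∞)` as soon as it is lower semi-continuous at `0`.

For the latter, couplings with prescribed marginals form a weakly compact set, on which the weight
`1 + |x|` has constant integral; so costs that are lower semi-continuous and bounded below by such a
weight have weakly lower semi-continuous integrals. Applied to products of `X_{t+1} - X_t` with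
continuous compactly supported functions of the past, this shows that a weak limit of elements of
`ℳ_{ε_n}`, `ε_n → 0`, is a martingale measure; applied to `c`, it bounds the cost of the limit.
-/

open scoped NNReal Topology

section WeakConvergence

lemma isTightMeasureSet_of_forall_eval {ι : Type*} [Finite ι] {X : ι → Type*}
    [∀ i, MeasurableSpace (X i)] [∀ i, TopologicalSpace (X i)] {S : Set (Measure (∀ i, X i))}
    (hS : ∀ i, IsTightMeasureSet (Measure.map (fun x => x i) '' S)) : IsTightMeasureSet S := by
  have := Fintype.ofFinite ι
  simp only [isTightMeasureSet_iff_exists_isCompact_measure_compl_le,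
    Set.forall_mem_image] at hS ⊢
  intro ε hε
  obtain ⟨δ, hδ, hδε⟩ := ENNReal.exists_pos_sum_of_countable' hε.ne' ι
  choose K hK_compact hK using fun i => hS i (δ i) (hδ i)
  refine ⟨Set.univ.pi K, isCompact_univ_pi hK_compact, fun π hπ => ?_⟩
  calc π (Set.univ.pi K)ᶜ
      ≤ π (⋃ i, (fun x => x i) ⁻¹' (K i)ᶜ) := measure_mono fun x hx => by simpa using hx
    _ ≤ ∑ i, π ((fun x => x i) ⁻¹' (K i)ᶜ) := measure_iUnion_fintype_le _ _
    _ ≤ ∑ i, δ i := Finset.sum_le_sum fun i _ =>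
      (Measure.le_map_apply (measurable_pi_apply i).aemeasurable _).trans (hK i hπ)
    _ ≤ ε := by rw [tsum_fintype] at hδε; exact hδε.le

variable {Ω : Type*} [MeasurableSpace Ω] [TopologicalSpace Ω] [OpensMeasurableSpace Ω]
  [HasOuterApproxClosed Ω] {p : ℕ → ProbabilityMeasure Ω} {q : ProbabilityMeasure Ω}

lemma lintegral_ofReal_le_liminf_of_lowerSemicontinuous (hpq : Tendsto p atTop (𝓝 q)) {g : Ω → ℝ}
    (hg : LowerSemicontinuous g) (hg_nonneg : ∀ x, 0 ≤ g x) :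
    ∫⁻ x, ENNReal.ofReal (g x) ∂q ≤ liminf (fun n => ∫⁻ x, ENNReal.ofReal (g x) ∂p n) atTop := by
  simp_rw [lintegral_eq_lintegral_meas_lt _ (ae_of_all _ hg_nonneg) hg.measurable.aemeasurable]
  calc ∫⁻ t in Set.Ioi (0 : ℝ), (q : Measure Ω) {x | t < g x}
      ≤ ∫⁻ t in Set.Ioi (0 : ℝ), liminf (fun n => (p n : Measure Ω) {x | t < g x}) atTop :=
        lintegral_mono fun t =>
          ProbabilityMeasure.le_liminf_measure_open_of_tendsto hpq (hg.isOpen_preimage t)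
    _ ≤ _ := lintegral_liminf_le fun n =>
        Antitone.measurable fun _ _ hst => measure_mono fun _ hx => lt_of_le_of_lt hst hx

lemma integrable_and_integral_le_of_tendsto_of_nonneg (hpq : Tendsto p atTop (𝓝 q)) {g : Ω → ℝ}
    (hg : LowerSemicontinuous g) (hg_nonneg : ∀ x, 0 ≤ g x)
    (hg_int : ∀ n, Integrable g (p n : Measure Ω)) {a : ℕ → ℝ} {b : ℝ}
    (ha : ∀ n, ∫ x, g x ∂(p n : Measure Ω) ≤ a n) (hab : Tendsto a atTop (𝓝 b)) :
    Integrable g (q : Measure Ω) ∧ ∫ x, g x ∂(q : Measure Ω) ≤ b := by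
  have hb : 0 ≤ b := ge_of_tendsto' hab fun n => (integral_nonneg hg_nonneg).trans (ha n)
  have hle : ∫⁻ x, ENNReal.ofReal (g x) ∂q ≤ ENNReal.ofReal b :=
    calc ∫⁻ x, ENNReal.ofReal (g x) ∂q
        ≤ liminf (fun n => ∫⁻ x, ENNReal.ofReal (g x) ∂p n) atTop :=
          lintegral_ofReal_le_liminf_of_lowerSemicontinuous hpq hg hg_nonneg
      _ ≤ liminf (fun n => ENNReal.ofReal (a n)) atTop :=
          liminf_le_liminf <| Eventually.of_forall fun n => by
            rw [← ofReal_integral_eq_lintegral_ofReal (hg_int n) (ae_of_all _ hg_nonneg)]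
            exact ENNReal.ofReal_le_ofReal (ha n)
      _ = ENNReal.ofReal b := (ENNReal.tendsto_ofReal hab).liminf_eq
  have hint : Integrable g (q : Measure Ω) :=
    (lintegral_ofReal_ne_top_iff_integrable hg.measurable.aestronglyMeasurable
      (ae_of_all _ hg_nonneg)).1 (ne_top_of_le_ne_top ENNReal.ofReal_ne_top hle)
  refine ⟨hint, (ENNReal.ofReal_le_ofReal_iff hb).1 ?_⟩
  rwa [ofReal_integral_eq_lintegral_ofReal hint (ae_of_all _ hg_nonneg)]

lemma integrable_and_integral_le_of_tendsto_of_neg_le (hpq : Tendsto p atTop (𝓝 q)) {c w : Ω → ℝ}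
    (hw : Continuous w) (hw_int : ∀ n, Integrable w (p n : Measure Ω))
    (hw_int_lim : Integrable w (q : Measure Ω))
    (hw_lim : Tendsto (fun n => ∫ x, w x ∂(p n : Measure Ω)) atTop
      (𝓝 (∫ x, w x ∂(q : Measure Ω))))
    (hc : LowerSemicontinuous c) (hwc : ∀ x, -w x ≤ c x)
    (hc_int : ∀ n, Integrable c (p n : Measure Ω)) {a : ℕ → ℝ} {b : ℝ}
    (ha : ∀ n, ∫ x, c x ∂(p n : Measure Ω) ≤ a n) (hab : Tendsto a atTop (𝓝 b)) :
    Integrable c (q : Measure Ω) ∧ ∫ x, c x ∂(q : Measure Ω) ≤ b := by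
  obtain ⟨hsum_int, hsum_le⟩ := integrable_and_integral_le_of_tendsto_of_nonneg hpq
    (hc.add hw.lowerSemicontinuous) (fun x => neg_le_iff_add_nonneg.1 (hwc x))
    (fun n => (hc_int n).add (hw_int n))
    (fun n => (integral_add (hc_int n) (hw_int n)).trans_le (add_le_add_left (ha n) _))
    (hab.add hw_lim)
  have hint : Integrable c (q : Measure Ω) :=
    (hsum_int.sub hw_int_lim).congr (ae_of_all _ fun x => by simp)
  rw [integral_add hint hw_int_lim] at hsum_le
  exact ⟨hint, le_of_add_le_add_right hsum_le⟩

end WeakConvergence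

section CondExp

variable {Ω : Type*} {m m₀ : MeasurableSpace Ω} {μ : Measure Ω} [IsFiniteMeasure μ]
  {f g : Ω → ℝ} {C : ℝ}

lemma integral_mul_condExp_of_bound (hm : m ≤ m₀) (hf : Integrable f μ)
    (hg : StronglyMeasurable[m] g) (hgC : ∀ ω, |g ω| ≤ C) :
    ∫ ω, g ω * (μ[f | m]) ω ∂μ = ∫ ω, g ω * f ω ∂μ :=
  calc ∫ ω, g ω * (μ[f | m]) ω ∂μ
      = ∫ ω, (μ[g * f | m]) ω ∂μ := (integral_congr_ae
        (condExp_stronglyMeasurable_mul_of_bound hm hg hf C (ae_of_all _ hgC))).symm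
    _ = ∫ ω, g ω * f ω ∂μ := integral_condExp hm

lemma integral_mul_le_mul_integral_abs_condExp (hm : m ≤ m₀) (hf : Integrable f μ)
    (hg : StronglyMeasurable[m] g) (hgC : ∀ ω, |g ω| ≤ C) :
    ∫ ω, g ω * f ω ∂μ ≤ C * ∫ ω, |(μ[f | m]) ω| ∂μ := by
  rw [← integral_mul_condExp_of_bound hm hf hg hgC, ← integral_const_mul]
  refine integral_mono (integrable_condExp.bdd_mul (hg.mono hm).aestronglyMeasurable
    (ae_of_all _ hgC)) (integrable_condExp.abs.const_mul C) fun ω => ?_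
  calc g ω * (μ[f | m]) ω ≤ |g ω| * |(μ[f | m]) ω| := (le_abs_self _).trans_eq (abs_mul _ _)
    _ ≤ C * |(μ[f | m]) ω| := mul_le_mul_of_nonneg_right (hgC ω) (abs_nonneg _)

lemma exists_integral_mul_eq_integral_abs_condExp (hm : m ≤ m₀) (hf : Integrable f μ) :
    ∃ g : Ω → ℝ, StronglyMeasurable[m] g ∧ (∀ ω, |g ω| ≤ 1) ∧
      ∫ ω, g ω * f ω ∂μ = ∫ ω, |(μ[f | m]) ω| ∂μ := by
  have hsign : Measurable fun x : ℝ => (SignType.sign x : ℝ) := by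
    have (x : ℝ) : (SignType.sign x : ℝ) = if 0 < x then 1 else if x < 0 then -1 else 0 := by
      rw [sign_apply]
      split_ifs <;> simp
    simp only [this]
    exact .ite measurableSet_Ioi measurable_const
      (.ite measurableSet_Iio measurable_const measurable_const)
  have hsign_le (x : ℝ) : |(SignType.sign x : ℝ)| ≤ 1 := by
    cases SignType.sign x <;> simp
  have hg : StronglyMeasurable[m] fun ω => (SignType.sign ((μ[f | m]) ω) : ℝ) :=
    (hsign.comp stronglyMeasurable_condExp.measurable).stronglyMeasurable
  refine ⟨_, hg, fun ω => hsign_le _, ?_⟩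
  rw [← integral_mul_condExp_of_bound hm hf hg fun ω => hsign_le _]
  simp only [sign_mul_self]

/- `∫ |π[f | m]| ∂π` is the supremum of the functionals `∫ g * f ∂π`, linear in `π`, over
`m`-measurable `g` with `|g| ≤ 1`. -/
lemma integral_abs_condExp_smul_add_smul_le {π₁ π₂ : Measure Ω} [IsFiniteMeasure π₁]
    [IsFiniteMeasure π₂] (hm : m ≤ m₀) (hf₁ : Integrable f π₁) (hf₂ : Integrable f π₂)
    (a b : ℝ≥0) :
    ∫ ω, |((a • π₁ + b • π₂)[f | m]) ω| ∂(a • π₁ + b • π₂) ≤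
      a * ∫ ω, |(π₁[f | m]) ω| ∂π₁ + b * ∫ ω, |(π₂[f | m]) ω| ∂π₂ := by
  have hf : Integrable f (a • π₁ + b • π₂) :=
    hf₁.smul_measure_nnreal.add_measure hf₂.smul_measure_nnreal
  obtain ⟨g, hg, hg_le, hg_eq⟩ := exists_integral_mul_eq_integral_abs_condExp hm hf
  have hgf {π : Measure Ω} (hfπ : Integrable f π) : Integrable (fun ω => g ω * f ω) π :=
    hfπ.bdd_mul (hg.mono hm).aestronglyMeasurable (ae_of_all _ hg_le)
  have hle {π : Measure Ω} [IsFiniteMeasure π] (hfπ : Integrable f π) :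
      ∫ ω, g ω * f ω ∂π ≤ ∫ ω, |(π[f | m]) ω| ∂π := by
    simpa using integral_mul_le_mul_integral_abs_condExp hm hfπ hg hg_le
  rw [← hg_eq, integral_add_measure (hgf hf₁).smul_measure_nnreal (hgf hf₂).smul_measure_nnreal,
    integral_smul_nnreal_measure, integral_smul_nnreal_measure]
  simp only [NNReal.smul_def, smul_eq_mul]
  exact add_le_add (mul_le_mul_of_nonneg_left (hle hf₁) a.coe_nonneg)
    (mul_le_mul_of_nonneg_left (hle hf₂) b.coe_nonneg)

variable {E : Type*} [NormedAddCommGroup E] [NormedSpace ℝ E] [FiniteDimensional ℝ E]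
  [MeasurableSpace E] [BorelSpace E] {R : Ω → E}

lemma condExp_comap_ae_eq_zero_of_forall_integral_eq_zero (hR : Measurable R)
    (hf : Integrable f μ)
    (H : ∀ h : E → ℝ, Continuous h → HasCompactSupport h → ∫ ω, h (R ω) * f ω ∂μ = 0) :
    μ[f | MeasurableSpace.comap R inferInstance] =ᵐ[μ] 0 := by
  obtain ⟨φ, hφ, hφR⟩ := (stronglyMeasurable_condExp (μ := μ) (f := f)
    (m := MeasurableSpace.comap R inferInstance)).exists_eq_measurable_comp
  have hφ_int : Integrable φ (μ.map R) := by
    rw [integrable_map_measure hφ.aestronglyMeasurable hR.aemeasurable, ← hφR]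
    exact integrable_condExp
  have hφ_zero : ∀ᵐ y ∂μ.map R, φ y = 0 :=
    ae_eq_zero_of_integral_contDiff_smul_eq_zero hφ_int.locallyIntegrable fun h hh hh_supp => by
      obtain ⟨C, hC⟩ := hh_supp.exists_bound_of_continuous hh.continuous
      have hh_meas : Measurable h := hh.continuous.measurable
      have hhφ : StronglyMeasurable fun y => h y • φ y := hh_meas.stronglyMeasurable.smul hφ
      calc ∫ y, h y • φ y ∂μ.map R
          = ∫ ω, h (R ω) * (μ[f | MeasurableSpace.comap R inferInstance]) ω ∂μ := by
            rw [integral_map hR.aemeasurable hhφ.aestronglyMeasurable, hφR]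
            rfl
        _ = ∫ ω, h (R ω) * f ω ∂μ := integral_mul_condExp_of_bound hR.comap_le hf
            (hh_meas.comp (comap_measurable R)).stronglyMeasurable fun ω => hC (R ω)
        _ = 0 := H h hh.continuous hh_supp
  rw [hφR]
  exact ae_of_ae_map hR.aemeasurable hφ_zero

lemma condExp_comap_ae_eq_zero_of_tendsto [TopologicalSpace Ω] [OpensMeasurableSpace Ω]
    [HasOuterApproxClosed Ω] {p : ℕ → ProbabilityMeasure Ω} {q : ProbabilityMeasure Ω}
    (hpq : Tendsto p atTop (𝓝 q)) (hR_cont : Continuous R) (hf : Continuous f) {w : Ω → ℝ}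
    (hfw : ∀ ω, |f ω| ≤ w ω) (hw : Continuous w)
    (hw_int : ∀ n, Integrable w (p n : Measure Ω)) (hw_int_lim : Integrable w (q : Measure Ω))
    (hw_lim : Tendsto (fun n => ∫ ω, w ω ∂(p n : Measure Ω)) atTop
      (𝓝 (∫ ω, w ω ∂(q : Measure Ω)))) {e : ℕ → ℝ} (he : Tendsto e atTop (𝓝 0))
    (hpe : ∀ n, ∫ ω, |((p n : Measure Ω)[f | MeasurableSpace.comap R inferInstance]) ω|
      ∂(p n : Measure Ω) ≤ e n) :
    (q : Measure Ω)[f | MeasurableSpace.comap R inferInstance] =ᵐ[(q : Measure Ω)] 0 := by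
  have hf_int {π : Measure Ω} (hπ : Integrable w π) : Integrable f π :=
    hπ.mono' hf.measurable.aestronglyMeasurable (ae_of_all _ hfw)
  have hle (h : E → ℝ) (hh : Continuous h) (hh_supp : HasCompactSupport h) :
      ∫ ω, h (R ω) * f ω ∂(q : Measure Ω) ≤ 0 := by
    obtain ⟨C, hC⟩ := hh_supp.exists_bound_of_continuous hh
    have hC_nonneg : 0 ≤ C := (norm_nonneg _).trans (hC 0)
    have hbound (ω : Ω) : |h (R ω) * f ω| ≤ C * w ω := by
      rw [abs_mul]
      exact mul_le_mul (hC _) (hfw ω) (abs_nonneg _) hC_nonneg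
    have hhf : Continuous fun ω => h (R ω) * f ω := (hh.comp hR_cont).mul hf
    refine (integrable_and_integral_le_of_tendsto_of_neg_le hpq (hw.const_mul C)
      (fun n => (hw_int n).const_mul C) (hw_int_lim.const_mul C) ?_ hhf.lowerSemicontinuous
      (fun ω => (abs_le.1 (hbound ω)).1) (fun n => ?_) (a := fun n => C * e n) (fun n => ?_) ?_).2
    · simpa only [integral_const_mul] using hw_lim.const_mul C
    · exact ((hw_int n).const_mul C).mono' hhf.measurable.aestronglyMeasurable
        (ae_of_all _ hbound)
    · have hhR : Measurable[MeasurableSpace.comap R inferInstance] fun ω => h (R ω) :=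
        hh.measurable.comp (comap_measurable R)
      exact (integral_mul_le_mul_integral_abs_condExp hR_cont.measurable.comap_le
        (hf_int (hw_int n)) hhR.stronglyMeasurable fun ω => hC (R ω)).trans
        (mul_le_mul_of_nonneg_left (hpe n) hC_nonneg)
    · simpa using he.const_mul C
  refine condExp_comap_ae_eq_zero_of_forall_integral_eq_zero hR_cont.measurable
    (hf_int hw_int_lim) fun h hh hh_supp => le_antisymm (hle h hh hh_supp) ?_
  simpa [integral_neg] using hle (fun y => -h y) hh.neg hh_supp.neg

end CondExp

section Defect

variable {T d : ℕ}

/-- The path up to and including time `t`: a single random vector, with values in a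
finite-dimensional space, that generates `pastSigma T d t`. -/
def past (T d t : ℕ) (x : Path T d) : {s : Fin T // (s : ℕ) ≤ t} → Fin d → ℝ := fun s => x s

lemma continuous_past (t : ℕ) : Continuous (past T d t) :=
  continuous_pi fun s => continuous_apply s.1

lemma pastSigma_eq_comap_past (t : ℕ) :
    pastSigma T d t = MeasurableSpace.comap (past T d t) inferInstance := by
  change _ = MeasurableSpace.comap (past T d t) MeasurableSpace.pi
  simp only [MeasurableSpace.pi, MeasurableSpace.comap_iSup, MeasurableSpace.comap_comp,
    pastSigma, iSup_subtype]
  rfl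

lemma pastSigma_le (t : ℕ) : pastSigma T d t ≤ (inferInstance : MeasurableSpace (Path T d)) :=
  (pastSigma_eq_comap_past t).trans_le (continuous_past t).measurable.comap_le

/-- The `i`-th coordinate of the increment `X_{t+1} - X_t`. -/
def increment {t : ℕ} (ht : t + 1 < T) (i : Fin d) (x : Path T d) : ℝ :=
  x ⟨t + 1, ht⟩ i - x ⟨t, Nat.lt_of_succ_lt ht⟩ i

lemma continuous_increment {t : ℕ} (ht : t + 1 < T) (i : Fin d) : Continuous (increment ht i) := by
  unfold increment
  fun_prop

/-- The quantity `E_π[|E_π[X_{t+1} - X_t | X_0, …, X_t]|]` bounded by `ε` in `ℳ_ε`, where `|·|` is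
the `ℓ¹`-norm. -/
noncomputable def martingaleDefect (π : Measure (Path T d)) {t : ℕ} (ht : t + 1 < T) : ℝ :=
  ∑ i, ∫ x, |(π[increment ht i | pastSigma T d t]) x| ∂π

variable {π : Measure (Path T d)}

lemma integrable_increment (hπ : ∀ t i, Integrable (fun x : Path T d => x t i) π) {t : ℕ}
    (ht : t + 1 < T) (i : Fin d) : Integrable (increment ht i) π :=
  (hπ _ i).sub (hπ _ i)

variable [IsFiniteMeasure π]

lemma condExp_increment_ae_eq (hπ : ∀ t i, Integrable (fun x : Path T d => x t i) π) {t : ℕ}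
    (ht : t + 1 < T) (i : Fin d) :
    π[increment ht i | pastSigma T d t] =ᵐ[π]
      fun x => condNext π t ht i x - x ⟨t, Nat.lt_of_succ_lt ht⟩ i := by
  have hmeas : Measurable[pastSigma T d t]
      fun x : Path T d => x ⟨t, Nat.lt_of_succ_lt ht⟩ i := by
    rw [pastSigma_eq_comap_past]
    exact ((measurable_pi_apply i).comp
      (measurable_pi_apply (⟨⟨t, Nat.lt_of_succ_lt ht⟩, le_rfl⟩ : {s : Fin T // (s : ℕ) ≤ t}))).comp
      (comap_measurable (past T d t))
  have hX := condExp_of_stronglyMeasurable (pastSigma_le t) hmeas.stronglyMeasurable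
    (hπ ⟨t, Nat.lt_of_succ_lt ht⟩ i)
  filter_upwards [condExp_sub (hπ ⟨t + 1, ht⟩ i) (hπ ⟨t, Nat.lt_of_succ_lt ht⟩ i)
    (pastSigma T d t)] with x hx
  exact hx.trans (congrArg (_ - ·) (congrFun hX x))

lemma integral_sum_abs_condNext_sub (hπ : ∀ t i, Integrable (fun x : Path T d => x t i) π) {t : ℕ}
    (ht : t + 1 < T) :
    ∫ x, ∑ i, |condNext π t ht i x - x ⟨t, Nat.lt_of_succ_lt ht⟩ i| ∂π =
      martingaleDefect π ht := by
  have hint (i : Fin d) :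
      Integrable (fun x => |condNext π t ht i x - x ⟨t, Nat.lt_of_succ_lt ht⟩ i|) π :=
    (integrable_condExp.sub (hπ _ i)).abs
  rw [integral_finsetSum _ fun i _ => hint i]
  refine Finset.sum_congr rfl fun i _ => integral_congr_ae ?_
  filter_upwards [condExp_increment_ae_eq hπ ht i] with x hx
  rw [hx]

end Defect

section Marginals

variable {T d : ℕ} {μ : Fin T → Fin d → Measure ℝ} {π : Measure (Path T d)}

/-- The weight `K (1 + |x|)`, with `|·|` the `ℓ¹`-norm, that bounds a cost of linear growth. -/
def linearWeight (K : ℝ) (x : Path T d) : ℝ := K * (1 + ∑ t, ∑ i, |x t i|)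

lemma continuous_linearWeight (K : ℝ) : Continuous (linearWeight K : Path T d → ℝ) := by
  unfold linearWeight
  fun_prop

lemma measurable_coord (t : Fin T) (i : Fin d) : Measurable fun x : Path T d => x t i := by
  fun_prop

lemma abs_le_linearWeight (x : Path T d) (t : Fin T) (i : Fin d) : |x t i| ≤ linearWeight 1 x :=
  calc |x t i| ≤ ∑ j, |x t j| :=
        Finset.single_le_sum (f := fun j => |x t j|) (fun _ _ => abs_nonneg _) (Finset.mem_univ i)
    _ ≤ ∑ s, ∑ j, |x s j| := Finset.single_le_sum (f := fun s => ∑ j, |x s j|)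
        (fun _ _ => Finset.sum_nonneg fun _ _ => abs_nonneg _) (Finset.mem_univ t)
    _ ≤ linearWeight 1 x := by simp [linearWeight]

lemma abs_increment_le {t : ℕ} (ht : t + 1 < T) (i : Fin d) (x : Path T d) :
    |increment ht i x| ≤ linearWeight 2 x :=
  calc |increment ht i x| ≤ |x ⟨t + 1, ht⟩ i| + |x ⟨t, Nat.lt_of_succ_lt ht⟩ i| := abs_sub _ _
    _ ≤ linearWeight 1 x + linearWeight 1 x :=
        add_le_add (abs_le_linearWeight _ _ _) (abs_le_linearWeight _ _ _)
    _ = linearWeight 2 x := by unfold linearWeight; ring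

namespace HasMarginals

lemma integrable_coord (hπ : HasMarginals π μ) (hmom : ∀ t i, Integrable (fun y : ℝ => y) (μ t i))
    (t : Fin T) (i : Fin d) : Integrable (fun x : Path T d => x t i) π := by
  have h := hmom t i
  rw [← hπ t i] at h
  exact h.comp_measurable (measurable_coord t i)

lemma integrable_linearWeight [IsFiniteMeasure π] (hπ : HasMarginals π μ)
    (hmom : ∀ t i, Integrable (fun y : ℝ => y) (μ t i)) (K : ℝ) :
    Integrable (linearWeight K) π :=
  ((integrable_const 1).add <| integrable_finsetSum _ fun t _ => integrable_finsetSum _ fun i _ =>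
    (hπ.integrable_coord hmom t i).abs).const_mul K

lemma integral_linearWeight [IsProbabilityMeasure π] (hπ : HasMarginals π μ)
    (hmom : ∀ t i, Integrable (fun y : ℝ => y) (μ t i)) (K : ℝ) :
    ∫ x, linearWeight K x ∂π = K * (1 + ∑ t, ∑ i, ∫ y, |y| ∂μ t i) := by
  have hint (t : Fin T) (i : Fin d) := (hπ.integrable_coord hmom t i).abs
  have hint_sum (t : Fin T) : Integrable (fun x : Path T d => ∑ i, |x t i|) π :=
    integrable_finsetSum _ fun i _ => hint t i
  have hcoord (t : Fin T) (i : Fin d) : ∫ x : Path T d, |x t i| ∂π = ∫ y, |y| ∂μ t i := by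
    rw [← hπ t i, integral_map (measurable_coord t i).aemeasurable (by fun_prop)]
  unfold linearWeight
  rw [integral_const_mul, integral_add (integrable_const 1)
    (integrable_finsetSum _ fun t _ => hint_sum t), integral_finsetSum _ fun t _ => hint_sum t]
  simp only [integral_finsetSum _ fun i _ => hint _ i, hcoord, integral_const, probReal_univ,
    one_smul]

lemma smul_add_smul {π₁ π₂ : Measure (Path T d)} (h₁ : HasMarginals π₁ μ)
    (h₂ : HasMarginals π₂ μ) {a b : ℝ≥0} (hab : a + b = 1) :
    HasMarginals (a • π₁ + b • π₂) μ := fun t i => by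
  rw [Measure.map_add _ _ (measurable_coord t i), Measure.map_smul, Measure.map_smul, h₁ t i,
    h₂ t i, ← add_smul, hab, one_smul]

end HasMarginals

lemma isTightMeasureSet_setOf_hasMarginals (hμ : ∀ t i, IsFiniteMeasure (μ t i)) :
    IsTightMeasureSet {π : Measure (Path T d) | HasMarginals π μ} := by
  refine isTightMeasureSet_of_forall_eval fun t => isTightMeasureSet_of_forall_eval fun i => ?_
  refine (isTightMeasureSet_singleton (μ := μ t i)).subset ?_
  rintro _ ⟨_, ⟨π, hπ, rfl⟩, rfl⟩
  rw [Set.mem_singleton_iff, Measure.map_map (by fun_prop) (by fun_prop)]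
  exact hπ t i

lemma isClosed_setOf_hasMarginals (hμ : ∀ t i, IsProbabilityMeasure (μ t i)) :
    IsClosed {p : ProbabilityMeasure (Path T d) | HasMarginals (p : Measure (Path T d)) μ} := by
  simp only [HasMarginals, Set.ofPred_forall]
  refine isClosed_iInter fun t => isClosed_iInter fun i => ?_
  have hcont : Continuous fun x : Path T d => x t i := by fun_prop
  let ν : ProbabilityMeasure ℝ := ⟨μ t i, hμ t i⟩
  have hclosed := isClosed_eq (ProbabilityMeasure.continuous_map hcont) (continuous_const (y := ν))
  simpa only [← ProbabilityMeasure.toMeasure_injective.eq_iff, ProbabilityMeasure.toMeasure_map,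
    show (ν : Measure ℝ) = μ t i from rfl] using hclosed

lemma isCompact_setOf_hasMarginals (μ : Fin T → Fin d → Measure ℝ) :
    IsCompact {p : ProbabilityMeasure (Path T d) | HasMarginals (p : Measure (Path T d)) μ} := by
  rcases Set.eq_empty_or_nonempty
    {p : ProbabilityMeasure (Path T d) | HasMarginals (p : Measure (Path T d)) μ} with
    hempty | ⟨p, hp⟩
  · simp only [hempty, isCompact_empty]
  have hμ (t : Fin T) (i : Fin d) : IsProbabilityMeasure (μ t i) := by
    rw [← hp t i]
    exact Measure.isProbabilityMeasure_map (measurable_coord t i).aemeasurable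
  rw [← (isClosed_setOf_hasMarginals hμ).closure_eq]
  refine isCompact_closure_of_isTightMeasureSet <|
    (isTightMeasureSet_setOf_hasMarginals (μ := μ) fun t i => inferInstance).subset ?_
  rintro _ ⟨p, hp, rfl⟩
  exact hp

end Marginals

section RelaxedMartingaleMeasures

variable {T d : ℕ} {μ : Fin T → Fin d → Measure ℝ}

lemma mem_martSetEps_iff (hmom : ∀ t i, Integrable (fun y : ℝ => y) (μ t i))
    {π : Measure (Path T d)} {ε : ℝ} :
    π ∈ MartSetEps μ ε ↔ IsProbabilityMeasure π ∧ HasMarginals π μ ∧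
      ∀ (t : ℕ) (ht : t + 1 < T), martingaleDefect π ht ≤ ε := by
  refine and_congr_right fun _ => and_congr_right fun hπμ => ?_
  simp only [integral_sum_abs_condNext_sub (hπμ.integrable_coord hmom)]

lemma martSetEps_mono : Monotone (MartSetEps μ) :=
  fun _ _ hε _ hπ => ⟨hπ.1, hπ.2.1, fun t ht => (hπ.2.2 t ht).trans hε⟩

lemma martSet_subset_martSetEps_zero : MartSet μ ⊆ MartSetEps μ 0 := by
  rintro π ⟨hπ, hπμ, hmart⟩
  refine ⟨hπ, hπμ, fun t ht => (integral_eq_zero_of_ae ?_).le⟩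
  filter_upwards [ae_all_iff.2 (hmart t ht)] with x hx
  simp [hx]

lemma smul_add_smul_mem_martSetEps (hmom : ∀ t i, Integrable (fun y : ℝ => y) (μ t i))
    {π₁ π₂ : Measure (Path T d)} {ε₁ ε₂ : ℝ} (h₁ : π₁ ∈ MartSetEps μ ε₁)
    (h₂ : π₂ ∈ MartSetEps μ ε₂) {a b : ℝ≥0} (hab : a + b = 1) :
    a • π₁ + b • π₂ ∈ MartSetEps μ (a * ε₁ + b * ε₂) := by
  rw [mem_martSetEps_iff hmom] at h₁ h₂ ⊢
  obtain ⟨_, hμ₁, hdefect₁⟩ := h₁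
  obtain ⟨_, hμ₂, hdefect₂⟩ := h₂
  have hprob : IsProbabilityMeasure (a • π₁ + b • π₂) :=
    ⟨by simp [← ENNReal.coe_add, hab]⟩
  refine ⟨hprob, hμ₁.smul_add_smul hμ₂ hab, fun t ht => ?_⟩
  calc martingaleDefect (a • π₁ + b • π₂) ht
      ≤ a * martingaleDefect π₁ ht + b * martingaleDefect π₂ ht := by
        simp only [martingaleDefect, Finset.mul_sum, ← Finset.sum_add_distrib]
        exact Finset.sum_le_sum fun i _ => integral_abs_condExp_smul_add_smul_le (pastSigma_le t)
          (integrable_increment (hμ₁.integrable_coord hmom) ht i)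
          (integrable_increment (hμ₂.integrable_coord hmom) ht i) a b
    _ ≤ a * ε₁ + b * ε₂ := add_le_add (mul_le_mul_of_nonneg_left (hdefect₁ t ht) a.coe_nonneg)
        (mul_le_mul_of_nonneg_left (hdefect₂ t ht) b.coe_nonneg)

variable {p : ℕ → ProbabilityMeasure (Path T d)} {q : ProbabilityMeasure (Path T d)}

lemma tendsto_integral_linearWeight (hmom : ∀ t i, Integrable (fun y : ℝ => y) (μ t i))
    (hp : ∀ n, HasMarginals (p n : Measure (Path T d)) μ)
    (hq : HasMarginals (q : Measure (Path T d)) μ) (K : ℝ) :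
    Tendsto (fun n => ∫ x, linearWeight K x ∂(p n : Measure (Path T d))) atTop
      (𝓝 (∫ x, linearWeight K x ∂(q : Measure (Path T d)))) := by
  simp only [(hp _).integral_linearWeight hmom, hq.integral_linearWeight hmom, tendsto_const_nhds]

lemma mem_martSetEps_zero_of_tendsto (hmom : ∀ t i, Integrable (fun y : ℝ => y) (μ t i))
    (hpq : Tendsto p atTop (𝓝 q)) {e : ℕ → ℝ} (he : Tendsto e atTop (𝓝 0))
    (hp : ∀ n, (p n : Measure (Path T d)) ∈ MartSetEps μ (e n))
    (hq : HasMarginals (q : Measure (Path T d)) μ) :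
    (q : Measure (Path T d)) ∈ MartSetEps μ 0 := by
  simp only [mem_martSetEps_iff hmom] at hp ⊢
  refine ⟨inferInstance, hq, fun t ht => (Finset.sum_eq_zero fun i _ => ?_).le⟩
  have hpe (n : ℕ) : ∫ x, |((p n : Measure (Path T d))[increment ht i | pastSigma T d t]) x|
      ∂(p n : Measure (Path T d)) ≤ e n :=
    (Finset.single_le_sum (fun _ _ => integral_nonneg fun _ => abs_nonneg _)
      (Finset.mem_univ i)).trans ((hp n).2.2 t ht)
  rw [pastSigma_eq_comap_past] at hpe ⊢
  have hzero := condExp_comap_ae_eq_zero_of_tendsto hpq (continuous_past t)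
    (continuous_increment ht i) (abs_increment_le ht i) (continuous_linearWeight 2)
    (fun n => (hp n).2.1.integrable_linearWeight hmom 2) (hq.integrable_linearWeight hmom 2)
    (tendsto_integral_linearWeight hmom (fun n => (hp n).2.1) hq 2) he hpe
  refine integral_eq_zero_of_ae ?_
  filter_upwards [hzero] with x hx
  simp [hx]

variable {c : Path T d → ℝ} {K : ℝ}

lemma exists_mem_martSetEps_zero_integral_le (hmom : ∀ t i, Integrable (fun y : ℝ => y) (μ t i))
    (hc : LowerSemicontinuous c) (hcK : ∀ x, -linearWeight K x ≤ c x)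
    {e : ℕ → ℝ} (he : Tendsto e atTop (𝓝 0)) {π : ℕ → Measure (Path T d)}
    (hπ : ∀ n, π n ∈ MartSetEps μ (e n)) (hc_int : ∀ n, Integrable c (π n)) {b : ℝ}
    (hb : ∀ n, ∫ x, c x ∂π n ≤ b) :
    ∃ ρ ∈ MartSetEps μ 0, Integrable c ρ ∧ ∫ x, c x ∂ρ ≤ b := by
  let p : ℕ → ProbabilityMeasure (Path T d) := fun n => ⟨π n, (hπ n).1⟩
  have hp (n : ℕ) : HasMarginals (p n : Measure (Path T d)) μ := (hπ n).2.1
  obtain ⟨q, hq, φ, hφ, hφq⟩ := (isCompact_setOf_hasMarginals μ).tendsto_subseq hp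
  obtain ⟨hcq, hcq_le⟩ := integrable_and_integral_le_of_tendsto_of_neg_le hφq
    (continuous_linearWeight K) (fun n => (hp (φ n)).integrable_linearWeight hmom K)
    (hq.integrable_linearWeight hmom K)
    (tendsto_integral_linearWeight hmom (fun n => hp (φ n)) hq K) hc hcK (fun n => hc_int (φ n))
    (fun n => hb (φ n)) tendsto_const_nhds
  exact ⟨q, mem_martSetEps_zero_of_tendsto hmom hφq (he.comp hφ.tendsto_atTop)
    (fun n => hπ (φ n)) hq, hcq, hcq_le⟩

end RelaxedMartingaleMeasures

section Value

variable {T d : ℕ} {μ : Fin T → Fin d → Measure ℝ} {c : Path T d → ℝ} {K : ℝ}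

open scoped Pointwise

lemma primalVals_mono : Monotone (primalVals c) :=
  fun _ _ hS _ ⟨π, hπ, hr⟩ => ⟨π, hS hπ, hr⟩

lemma smul_primalVals_add_smul_primalVals_subset
    (hmom : ∀ t i, Integrable (fun y : ℝ => y) (μ t i)) {ε₁ ε₂ : ℝ} {a b : ℝ≥0}
    (hab : a + b = 1) :
    (a : ℝ) • primalVals c (MartSetEps μ ε₁) + (b : ℝ) • primalVals c (MartSetEps μ ε₂) ⊆
      primalVals c (MartSetEps μ (a * ε₁ + b * ε₂)) := by
  rintro _ ⟨_, ⟨_, ⟨π₁, hπ₁, hc₁, rfl⟩, rfl⟩, _, ⟨_, ⟨π₂, hπ₂, hc₂, rfl⟩, rfl⟩, rfl⟩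
  refine ⟨a • π₁ + b • π₂, smul_add_smul_mem_martSetEps hmom hπ₁ hπ₂ hab,
    hc₁.smul_measure_nnreal.add_measure hc₂.smul_measure_nnreal, ?_⟩
  rw [integral_add_measure hc₁.smul_measure_nnreal hc₂.smul_measure_nnreal,
    integral_smul_nnreal_measure, integral_smul_nnreal_measure]
  rfl

lemma primalVals_martSetEps_nonempty (hne : ∃ π ∈ MartSet μ, Integrable c π) {ε : ℝ}
    (hε : 0 ≤ ε) : (primalVals c (MartSetEps μ ε)).Nonempty := by
  obtain ⟨π, hπ, hc⟩ := hne
  exact ⟨_, π, martSetEps_mono hε (martSet_subset_martSetEps_zero hπ), hc, rfl⟩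

lemma bddBelow_primalVals_martSetEps (hmom : ∀ t i, Integrable (fun y : ℝ => y) (μ t i))
    (hcK : ∀ x, -linearWeight K x ≤ c x) (ε : ℝ) :
    BddBelow (primalVals c (MartSetEps μ ε)) := by
  refine ⟨-(K * (1 + ∑ t, ∑ i, ∫ y, |y| ∂μ t i)), ?_⟩
  rintro _ ⟨π, ⟨_, hπμ, _⟩, hc, rfl⟩
  rw [← hπμ.integral_linearWeight hmom, ← integral_neg]
  exact integral_mono (hπμ.integrable_linearWeight hmom K).neg hc hcK

lemma antitoneOn_plowEps (hmom : ∀ t i, Integrable (fun y : ℝ => y) (μ t i))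
    (hcK : ∀ x, -linearWeight K x ≤ c x) (hne : ∃ π ∈ MartSet μ, Integrable c π) :
    AntitoneOn (PlowEps μ c) (Set.Ici 0) := fun _ hε₁ ε₂ _ hε =>
  csInf_le_csInf (bddBelow_primalVals_martSetEps hmom hcK ε₂)
    (primalVals_martSetEps_nonempty hne hε₁) (primalVals_mono (martSetEps_mono hε))

lemma convexOn_plowEps (hmom : ∀ t i, Integrable (fun y : ℝ => y) (μ t i))
    (hcK : ∀ x, -linearWeight K x ≤ c x) (hne : ∃ π ∈ MartSet μ, Integrable c π) :
    ConvexOn ℝ (Set.Ici 0) (PlowEps μ c) := by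
  refine ⟨convex_Ici 0, fun ε₁ hε₁ ε₂ hε₂ a b ha hb hab => ?_⟩
  lift a to ℝ≥0 using ha
  lift b to ℝ≥0 using hb
  have hne₁ := primalVals_martSetEps_nonempty hne hε₁
  have hne₂ := primalVals_martSetEps_nonempty hne hε₂
  have hbdd := bddBelow_primalVals_martSetEps hmom hcK
  calc PlowEps μ c (a * ε₁ + b * ε₂)
      ≤ sInf ((a : ℝ) • primalVals c (MartSetEps μ ε₁) +
          (b : ℝ) • primalVals c (MartSetEps μ ε₂)) :=
        csInf_le_csInf (hbdd _) (hne₁.smul_set.add hne₂.smul_set)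
          (smul_primalVals_add_smul_primalVals_subset hmom (by exact_mod_cast hab))
    _ = (a : ℝ) • PlowEps μ c ε₁ + (b : ℝ) • PlowEps μ c ε₂ := by
        rw [csInf_add hne₁.smul_set ((hbdd ε₁).smul_of_nonneg a.coe_nonneg) hne₂.smul_set
          ((hbdd ε₂).smul_of_nonneg b.coe_nonneg), Real.sInf_smul_of_nonneg a.coe_nonneg,
          Real.sInf_smul_of_nonneg b.coe_nonneg]
        rfl

lemma lowerSemicontinuousWithinAt_plowEps_zero
    (hmom : ∀ t i, Integrable (fun y : ℝ => y) (μ t i)) (hc : LowerSemicontinuous c)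
    (hcK : ∀ x, -linearWeight K x ≤ c x) (hne : ∃ π ∈ MartSet μ, Integrable c π) :
    LowerSemicontinuousWithinAt (PlowEps μ c) (Set.Ici 0) 0 := by
  intro y hy
  by_contra hfreq
  obtain ⟨b, hyb, hb⟩ := exists_between hy
  obtain ⟨e, he, hey⟩ := exists_seq_forall_of_frequently
    ((not_eventually.1 hfreq).and_eventually self_mem_nhdsWithin)
  have hexists (n : ℕ) : ∃ π ∈ MartSetEps μ (e n), Integrable c π ∧ ∫ x, c x ∂π < b := by
    obtain ⟨_, ⟨π, hπ, hcπ, rfl⟩, hlt⟩ := exists_lt_of_csInf_lt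
      (primalVals_martSetEps_nonempty hne (hey n).2) ((not_lt.1 (hey n).1).trans_lt hyb)
    exact ⟨π, hπ, hcπ, hlt⟩
  choose π hπ hcπ hπb using hexists
  obtain ⟨ρ, hρ, hcρ, hρb⟩ := exists_mem_martSetEps_zero_integral_le hmom hc hcK
    (tendsto_nhds_of_tendsto_nhdsWithin he) hπ hcπ fun n => (hπb n).le
  exact hb.not_ge ((csInf_le (bddBelow_primalVals_martSetEps hmom hcK 0)
    ⟨ρ, hρ, hcρ, rfl⟩).trans hρb)

lemma continuousOn_plowEps (hmom : ∀ t i, Integrable (fun y : ℝ => y) (μ t i))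
    (hc : LowerSemicontinuous c) (hcK : ∀ x, -linearWeight K x ≤ c x)
    (hne : ∃ π ∈ MartSet μ, Integrable c π) : ContinuousOn (PlowEps μ c) (Set.Ici 0) := by
  refine (convexOn_plowEps hmom hcK hne).continuousOn_Ici <|
    continuousWithinAt_iff_lower_upperSemicontinuousWithinAt.2
      ⟨lowerSemicontinuousWithinAt_plowEps_zero hmom hc hcK hne, fun y hy => ?_⟩
  filter_upwards [self_mem_nhdsWithin] with ε hε
  exact (antitoneOn_plowEps hmom hcK hne Set.self_mem_Ici hε hε).trans_lt hy

end Value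

theorem plowEps_antitone_continuous_convex_general {T d : ℕ} {μ : Fin T → Fin d → Measure ℝ}
    (hmom : ∀ t i, Integrable (fun y : ℝ => y) (μ t i)) {c : Path T d → ℝ} {K : ℝ}
    (hlower : ∀ x, -(K * (1 + ∑ t, ∑ i, |x t i|)) ≤ c x)
    (hne : ∃ π ∈ MartSet μ, Integrable c π) (hlsc : LowerSemicontinuous c) :
    AntitoneOn (fun ε => PlowEps μ c ε) (Set.Ici 0) ∧
    ContinuousOn (fun ε => PlowEps μ c ε) (Set.Ici 0) ∧
    ConvexOn ℝ (Set.Ici 0) (fun ε => PlowEps μ c ε) :=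
  ⟨antitoneOn_plowEps hmom hlower hne, continuousOn_plowEps hmom hlsc hlower hne,
    convexOn_plowEps hmom hlower hne⟩

/-- Proposition: regularity of `ε ↦ P̲_ε(μ̌)`.
If the cost `c` is measurable, of linear growth and lower semi-continuous, and `ℳ(μ̌) ≠ ∅`,
then `ε ↦ P̲_ε(μ̌)` is non-increasing, continuous and convex on `ℝ₊`. -/
theorem plowEps_antitone_continuous_convex {T d : ℕ}
    (μ : Fin T → Fin d → Measure ℝ)
    (hprob : ∀ t i, IsProbabilityMeasure (μ t i))
    (hmom : ∀ t i, Integrable (fun y : ℝ => y) (μ t i))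
    (hne : (MartSet μ).Nonempty)
    (c : Path T d → ℝ) (hmeas : Measurable c)
    (K : ℝ) (hgrowth : ∀ x, |c x| ≤ K * (1 + ∑ t, ∑ i, |x t i|))
    (hlsc : LowerSemicontinuous c) :
    AntitoneOn (fun ε => PlowEps μ c ε) (Set.Ici 0) ∧
    ContinuousOn (fun ε => PlowEps μ c ε) (Set.Ici 0) ∧
    ConvexOn ℝ (Set.Ici 0) (fun ε => PlowEps μ c ε) := by
  obtain ⟨π, hπ_prob, hπμ, hπ_mart⟩ := hne
  have hπ_int : Integrable c π :=
    (hπμ.integrable_linearWeight hmom K).mono' hmeas.aestronglyMeasurable (ae_of_all _ hgrowth)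
  exact plowEps_antitone_continuous_convex_general hmom (fun x => (abs_le.1 (hgrowth x)).1)
    ⟨π, ⟨hπ_prob, hπμ, hπ_mart⟩, hπ_int⟩ hlsc

end MMOT
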